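/- arXiv:0802.4007 — 2 statements merged into one kernel-verified Lean document; each statement's English description precedes it below -/
import Mathlib

section
/- Let $M$ be a vector space over a field of characteristic zero equipped with a bilinear bracket $[\cdot,\cdot]$ satisfying $[x,x]=0$ for all $x$ and the Mal'tsev identity $[[x,y],[x,z]] = [[[x,y],z],x] + [[[y,z],x],x] + [[[z,x],x],y]$ for all $x,y,z$. Define the Loos bracket by $\{x,y,z\} := [x,[y,z]] - [y,[x,z]] + 2[[x,y],z]$. Then the Loos bracket satisfies the derivation identity $\{x,y,\{z,w,v\}\} = \{\{x,y,z\},w,v\} + \{z,\{x,y,w\},v\} + \{z,w,\{x,y,v\}\}$ for all $x,y,z,w,v \in M$. -/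
set_option linter.unusedSimpArgs false
set_option maxHeartbeats 8000000

theorem sagle
    (k : Type*) [Field k] [CharZero k] (M : Type*) [AddCommGroup M] [Module k M]
    (B : M →ₗ[k] M →ₗ[k] M)
    (halt : ∀ x : M, B x x = 0)
    (hmal : ∀ x y z : M,
      B (B x y) (B x z) =
        B (B (B x y) z) x + B (B (B y z) x) x + B (B (B z x) x) y) :
    ∀ a b c d : M, B (B a c) (B b d) = B (B (B a b) c) d + B (B (B b c) d) a
      + B (B (B c d) a) b + B (B (B d a) b) c := by
  intro x y z w
  have sk : ∀ a b : M, B a b = - B b a := by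
    intro a b
    have h := halt (a + b)
    simp only [map_add, LinearMap.add_apply, halt, zero_add, add_zero] at h
    exact eq_neg_of_add_eq_zero_right h
  have pol : ∀ x t y z : M, B (B x y) (B t z) + B (B t y) (B x z) =
      (B (B (B x y) z) t + B (B (B y z) x) t + B (B (B z x) t) y) +
      (B (B (B t y) z) x + B (B (B y z) t) x + B (B (B z t) x) y) := by
    intro x t y z
    have h := hmal (x + t) y z
    simp only [map_add, LinearMap.add_apply] at h
    linear_combination (norm := module) h - hmal x y z - hmal t y z
  have h1 := pol y x z w
  have h2 := pol w x y z
  have h3 := pol z x w y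
  have r1 := sk x w
  have r2 := sk y w
  have r3 := sk z w
  have r4 := sk y x
  have r5 := sk z x
  have r6 := sk z y
  have r7 := sk (B w y) (B x z)
  have r8 := sk (B x y) (B w z)
  have r9 := sk (B y z) (B w x)
  have r10 := sk (B x z) (B w y)
  simp only [map_neg, LinearMap.neg_apply, neg_neg, r1, r2, r3, r4, r5, r6, r8, r9, r10] at h1 h2 h3 ⊢
  linear_combination (norm := module) (1/2 : k) • h1 + (1/2 : k) • h2 - (1/2 : k) • h3


/-- For a Mal'tsev algebra `M` over a field of characteristic zero,
the Loos bracket `{x,y,z} = [x,[y,z]] - [y,[x,z]] + 2[[x,y],z]` satisfies the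
derivation identity of a Lie triple system. -/
theorem loos_derivation_identity
    (k : Type*) [Field k] [CharZero k] (M : Type*) [AddCommGroup M] [Module k M]
    (B : M →ₗ[k] M →ₗ[k] M)
    (halt : ∀ x : M, B x x = 0)
    (hmal : ∀ x y z : M,
      B (B x y) (B x z) =
        B (B (B x y) z) x + B (B (B y z) x) x + B (B (B z x) x) y)
    (loos : M → M → M → M)
    (hloos : ∀ x y z : M, loos x y z = B x (B y z) - B y (B x z) + 2 • B (B x y) z) :
    ∀ x y z w v : M,
      loos x y (loos z w v) =
        loos (loos x y z) w v + loos z (loos x y w) v + loos z w (loos x y v) := by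
  intro x y z w v
  have sk : ∀ a b : M, B a b = - B b a := by
    intro a b
    have h := halt (a + b)
    simp only [map_add, LinearMap.add_apply, halt, zero_add, add_zero] at h
    exact eq_neg_of_add_eq_zero_right h
  have sag := sagle k M B halt hmal
  have h0 := sag x v y (B w z)
  have h1 := sag z w v (B x y)
  have h2 := sag x y z (B v w)
  have h3 := congrArg (fun t => B t z) (sag v w y x)
  have h4 := congrArg (fun t => B t z) (sag v x y w)
  have h5 := congrArg (fun t => B t v) (sag w y x z)
  have h6 := sag v w z (B x y)
  have h7 := sag x y v (B w z)
  have h8 := sag z v w (B x y)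
  have h9 := sag w y v (B x z)
  have h10 := congrArg (fun t => B t z) (sag v x w y)
  have h11 := congrArg (fun t => B t v) (sag w z y x)
  have h12 := congrArg (fun t => B t v) (sag w x y z)
  have h13 := congrArg (fun t => B t v) (sag w x z y)
  have h14 := sag v y x (B w z)
  have h15 := sag w x y (B v z)
  have h16 := sag w v x (B y z)
  have h17 := sag x v w (B y z)
  have h18 := sag v x w (B y z)
  have h19 := congrArg (fun t => B t w) (sag v y x z)
  have h20 := sag v w y (B x z)
  have h21 := sag y w v (B x z)
  have h22 := sag y w x (B v z)
  have h23 := congrArg (fun t => B t w) (sag v x y z)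
  have h24 := sag y x w (B v z)
  have h25 := sag w v z (B x y)
  have h26 := sag y x z (B v w)
  have r0 := sk w v
  have r1 := sk x v
  have r2 := sk y v
  have r3 := sk z v
  have r4 := sk x w
  have r5 := sk y w
  have r6 := sk z w
  have r7 := sk y x
  have r8 := sk z x
  have r9 := sk z y
  have r10 := fun p q => sk x (B p q)
  have r11 := fun p q => sk y (B p q)
  have r12 := fun p q => sk z (B p q)
  have r13 := fun p q => sk w (B p q)
  have r14 := fun p q => sk v (B p q)
  have r15 := sk (B x y) (B v w)
  have r16 := sk (B x z) (B v w)
  have r17 := sk (B y z) (B v w)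
  have r18 := sk (B w y) (B v x)
  have r19 := sk (B w z) (B v x)
  have r20 := sk (B y z) (B v x)
  have r21 := sk (B w x) (B v y)
  have r22 := sk (B w z) (B v y)
  have r23 := sk (B x z) (B v y)
  have r24 := sk (B w x) (B v z)
  have r25 := sk (B w y) (B v z)
  have r26 := sk (B x y) (B v z)
  have r27 := sk (B y z) (B w x)
  have r28 := sk (B x z) (B w y)
  have r29 := sk (B x y) (B w z)
  have r30 := fun p q r => sk (B v w) (B (B p q) r)
  have r31 := fun p q r => sk (B v x) (B (B p q) r)
  have r32 := fun p q r => sk (B v y) (B (B p q) r)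
  have r33 := fun p q r => sk (B v z) (B (B p q) r)
  have r34 := fun p q r => sk (B w x) (B (B p q) r)
  have r35 := fun p q r => sk (B w y) (B (B p q) r)
  have r36 := fun p q r => sk (B w z) (B (B p q) r)
  have r37 := fun p q r => sk (B x y) (B (B p q) r)
  have r38 := fun p q r => sk (B x z) (B (B p q) r)
  have r39 := fun p q r => sk (B y z) (B (B p q) r)
  simp only [hloos]
  simp only [map_add, map_sub, map_neg, LinearMap.add_apply, LinearMap.sub_apply, LinearMap.neg_apply, neg_neg, two_nsmul, r0, r1, r2, r3, r4, r5, r6, r7, r8, r9, r10, r11, r12, r13, r14, r15, r16, r17, r18, r19, r20, r21, r22, r23, r24, r25, r26, r27, r28, r29, r30, r31, r32, r33, r34, r35, r36, r37, r38, r39] at h0 h1 h2 h3 h4 h5 h6 h7 h8 h9 h10 h11 h12 h13 h14 h15 h16 h17 h18 h19 h20 h21 h22 h23 h24 h25 h26 ⊢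
  linear_combination (norm := module) (2 : k) • h0 + (2 : k) • h1 + (-1 : k) • h2 + (-1 : k) • h3 + (-1 : k) • h4 + (1 : k) • h5 + (1 : k) • h6 + (2 : k) • h7 + (1 : k) • h8 + (-1 : k) • h9 + (-1 : k) • h10 + (3 : k) • h11 + (2 : k) • h12 + (3 : k) • h13 + (2 : k) • h14 + (-1 : k) • h15 + (-1 : k) • h16 + (-1 : k) • h17 + (-1 : k) • h18 + (-1 : k) • h19 + (-1 : k) • h20 + (-1 : k) • h21 + (-1 : k) • h22 + (1 : k) • h23 + (-1 : k) • h24 + (-1 : k) • h25 + (1 : k) • h26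
end

section
/- Let $M$ be a vector space over a field of characteristic zero equipped with a bilinear bracket $[\cdot,\cdot]$ satisfying $[x,x]=0$ for all $x$ and the Mal'tsev identity $[[x,y],[x,z]] = [[[x,y],z],x] + [[[y,z],x],x] + [[[z,x],x],y]$ for all $x,y,z$. Then $M$ with the Loos bracket $\{x,y,z\} := [x,[y,z]] - [y,[x,z]] + 2[[x,y],z]$ is a Lie triple system; that is, for all $x,y,z,w,v \in M$: (a) $\{x,y,z\} = -\{y,x,z\}$; (b) $\{x,y,z\} + \{y,z,x\} + \{z,x,y\} = 0$; (c) $\{x,y,\{z,w,v\}\} = \{\{x,y,z\},w,v\} + \{z,\{x,y,w\},v\} + \{z,w,\{x,y,v\}\}$. -/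
/-- A Mal'tsev algebra over a field of characteristic zero is a Lie
triple system under the Loos bracket `{x,y,z} = [x,[y,z]] - [y,[x,z]] + 2[[x,y],z]`:
skew-symmetry in the first two arguments, vanishing cyclic sum, and the
derivation identity all hold. -/
theorem maltsev_loos_lieTripleSystem
    (k : Type*) [Field k] [CharZero k] (M : Type*) [AddCommGroup M] [Module k M]
    (B : M →ₗ[k] M →ₗ[k] M)
    (halt : ∀ x : M, B x x = 0)
    (hmal : ∀ x y z : M,
      B (B x y) (B x z) =
        B (B (B x y) z) x + B (B (B y z) x) x + B (B (B z x) x) y)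
    (loos : M → M → M → M)
    (hloos : ∀ x y z : M, loos x y z = B x (B y z) - B y (B x z) + 2 • B (B x y) z) :
    (∀ x y z : M, loos x y z = - loos y x z) ∧
    (∀ x y z : M, loos x y z + loos y z x + loos z x y = 0) ∧
    (∀ x y z w v : M,
      loos x y (loos z w v) =
        loos (loos x y z) w v + loos z (loos x y w) v + loos z w (loos x y v)) := by
  have sk : ∀ x y : M, B x y = - B y x := by
    intro x y
    have h := halt (x + y)
    simp only [map_add, LinearMap.add_apply, halt, zero_add, add_zero] at h
    exact eq_neg_of_add_eq_zero_right h
  have lin : ∀ p q y z : M,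
      B (B p y) (B q z) + B (B q y) (B p z) =
        B (B (B p y) z) q + B (B (B y z) p) q + B (B (B z p) q) y
        + (B (B (B q y) z) p + B (B (B y z) q) p + B (B (B z q) p) y) := by
    intro p q y z
    have h := hmal (p + q) y z
    simp only [map_add, LinearMap.add_apply] at h
    linear_combination (norm := module) h - hmal p y z - hmal q y z
  have der : ∀ a z w v : M, B a (loos z w v) =
      loos (B a z) w v + loos z (B a w) v + loos z w (B a v) := by
    intro a z w v
    have h1 := lin a z w v
    have h2 := lin a z v w
    have h3 := lin a w z v
    have h4 := lin a v z w
    have e1 := sk v a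
    have e2 := sk w a
    have e3 := sk z a
    have e4 := sk w v
    have e5 := sk z v
    have e6 := sk z w
    have f1 : ∀ x y, B a (B x y) = - B (B x y) a := fun x y => sk _ _
    have f2 : ∀ x y, B v (B x y) = - B (B x y) v := fun x y => sk _ _
    have f3 : ∀ x y, B w (B x y) = - B (B x y) w := fun x y => sk _ _
    have f4 : ∀ x y, B z (B x y) = - B (B x y) z := fun x y => sk _ _
    have g1 := sk (B v w) (B a z)
    have g2 := sk (B v z) (B a w)
    have g3 := sk (B w z) (B a v)
    simp only [hloos, e1, e2, e3, e4, e5, e6, f1, f2, f3, f4, g1, g2, g3, map_add, map_sub,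
      map_neg, map_nsmul, LinearMap.add_apply, LinearMap.sub_apply, LinearMap.neg_apply,
      LinearMap.smul_apply] at h1 h2 h3 h4 ⊢
    linear_combination (norm := module) h1 + 2 • h2 + h3 + 2 • h4
  have la : ∀ x x' y z : M, loos (x + x') y z = loos x y z + loos x' y z := by
    intro x x' y z
    simp only [hloos, map_add, LinearMap.add_apply]
    module
  have lb : ∀ x y y' z : M, loos x (y + y') z = loos x y z + loos x y' z := by
    intro x y y' z
    simp only [hloos, map_add, LinearMap.add_apply]
    module
  have lc : ∀ x y z z' : M, loos x y (z + z') = loos x y z + loos x y z' := by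
    intro x y z z'
    simp only [hloos, map_add]
    module
  have lan : ∀ x y z : M, loos (-x) y z = - loos x y z := by
    intro x y z
    simp only [hloos, map_neg, LinearMap.neg_apply]
    module
  have lbn : ∀ x y z : M, loos x (-y) z = - loos x y z := by
    intro x y z
    simp only [hloos, map_neg, LinearMap.neg_apply]
    module
  have lcn : ∀ x y z : M, loos x y (-z) = - loos x y z := by
    intro x y z
    simp only [hloos, map_neg]
    module
  refine ⟨?_, ?_, ?_⟩
  · intro x y z
    simp only [hloos, sk y x, map_neg, LinearMap.neg_apply]
    module
  · intro x y z
    simp only [hloos, sk (B _ _) _, sk z x, sk y x, sk z y, map_neg, LinearMap.neg_apply]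
    module
  · intro x y z w v
    have hl : ∀ u, loos x y u = B x (B y u) + -(B y (B x u)) + (B (B x y) u + B (B x y) u) := by
      intro u
      rw [hloos]
      module
    rw [hl (loos z w v), hl z, hl w, hl v]
    simp only [la, lb, lc, lan, lbn, lcn, der, map_add]
    module
end
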